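/- arXiv:1210.3932 — 3 statements merged into one kernel-verified Lean document; each statement's English description precedes it below -/
import Mathlib

section
/- For a càdlàg function f : [a,b] → ℝ and c > 0, there exists a càdlàg function f^c : [a,b] → ℝ such that ‖f^c − f‖_∞ ≤ c/2 and TV(f^c,[a,b]) = TV^c(f,[a,b]); consequently inf{ TV(g,[a,b]) : ‖g − f‖_∞ ≤ c/2 } = TV^c(f,[a,b]) and the infimum is attained. -/
open Set Filter

/-- A finite partition `t 0 < t 1 < ... < t n` of points in `[a, b]`. -/
def IsPart (a b : ℝ) (n : ℕ) (t : ℕ → ℝ) : Prop :=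
  a ≤ t 0 ∧ t n ≤ b ∧ ∀ i < n, t i < t (i + 1)

/-- Total variation of `f` on `[a, b]`. -/
noncomputable def TVar {E : Type*} [PseudoMetricSpace E] (f : ℝ → E) (a b : ℝ) : ENNReal :=
  ⨆ (n : ℕ) (t : ℕ → ℝ) (_ : IsPart a b n t),
    ∑ i ∈ Finset.range n, ENNReal.ofReal (dist (f (t (i + 1))) (f (t i)))

/-- Truncated variation of `f` at level `c` on `[a, b]`. -/
noncomputable def TVc {E : Type*} [PseudoMetricSpace E] (f : ℝ → E) (c a b : ℝ) : ENNReal :=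
  ⨆ (n : ℕ) (t : ℕ → ℝ) (_ : IsPart a b n t),
    ∑ i ∈ Finset.range n, ENNReal.ofReal (dist (f (t (i + 1))) (f (t i)) - c)

/-- Upward truncated variation. -/
noncomputable def UTVc (f : ℝ → ℝ) (c a b : ℝ) : ENNReal :=
  ⨆ (n : ℕ) (t : ℕ → ℝ) (_ : IsPart a b n t),
    ∑ i ∈ Finset.range n, ENNReal.ofReal (f (t (i + 1)) - f (t i) - c)

/-- Downward truncated variation. -/
noncomputable def DTVc (f : ℝ → ℝ) (c a b : ℝ) : ENNReal :=
  ⨆ (n : ℕ) (t : ℕ → ℝ) (_ : IsPart a b n t),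
    ∑ i ∈ Finset.range n, ENNReal.ofReal (f (t i) - f (t (i + 1)) - c)

/-- `f` is càdlàg on `[a, b]`: right-continuous on `[a, b)`, with left limits on `(a, b]`. -/
def Cadlag {E : Type*} [TopologicalSpace E] (f : ℝ → E) (a b : ℝ) : Prop :=
  (∀ t ∈ Set.Ico a b, Tendsto f (nhdsWithin t (Set.Ioi t)) (nhds (f t))) ∧
  (∀ t ∈ Set.Ioc a b, ∃ l, Tendsto f (nhdsWithin t (Set.Iio t)) (nhds l))

namespace OptApprox

/-! ### Variation of a difference of monotone functions -/

lemma part_mem {a b : ℝ} {n : ℕ} {t : ℕ → ℝ} (h : IsPart a b n t) :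
    ∀ i ≤ n, a ≤ t i ∧ t i ≤ b := by
  obtain ⟨h0, hn, hl⟩ := h
  have h1 : ∀ i ≤ n, a ≤ t i := by
    intro i
    induction i with
    | zero => intro _; exact h0
    | succ k ih => intro hk; have := ih (by omega); have := hl k (by omega); linarith
  have h2 : ∀ j ≤ n, t (n - j) ≤ b := by
    intro j
    induction j with
    | zero => intro _; simpa using hn
    | succ k ih =>
      intro hk
      have h3 := ih (by omega)
      have h4 := hl (n - (k + 1)) (by omega)
      have h5 : n - (k + 1) + 1 = n - k := by omega
      rw [h5] at h4
      linarith
  intro i hi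
  refine ⟨h1 i hi, ?_⟩
  have := h2 (n - i) (by omega)
  rwa [Nat.sub_sub_self hi] at this

lemma tvar_le_of_mono (p q : ℝ → ℝ) (hp : Monotone p) (hq : Monotone q) (a b : ℝ) :
    TVar (fun x => p x - q x) a b ≤ ENNReal.ofReal ((p b - p a) + (q b - q a)) := by
  unfold TVar
  refine iSup_le fun n => iSup_le fun t => iSup_le fun ht => ?_
  rw [← ENNReal.ofReal_sum_of_nonneg (fun _ _ => dist_nonneg)]
  apply ENNReal.ofReal_le_ofReal
  have h1 : ∑ i ∈ Finset.range n, dist (p (t (i + 1)) - q (t (i + 1))) (p (t i) - q (t i))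
      ≤ ∑ i ∈ Finset.range n, ((p (t (i + 1)) + q (t (i + 1))) - (p (t i) + q (t i))) := by
    apply Finset.sum_le_sum
    intro i hi
    have hlt := ht.2.2 i (Finset.mem_range.1 hi)
    have := hp hlt.le
    have := hq hlt.le
    rw [Real.dist_eq, abs_le]
    constructor <;> linarith
  rw [Finset.sum_range_sub (fun i => p (t i) + q (t i))] at h1
  have := hp ht.1
  have := hq ht.1
  have := hp ht.2.1
  have := hq ht.2.1
  linarith

lemma tvc_le_tvar (f g : ℝ → ℝ) (a b c : ℝ)
    (h : ∀ t ∈ Set.Icc a b, |g t - f t| ≤ c / 2) : TVc f c a b ≤ TVar g a b := by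
  unfold TVar TVc
  refine iSup_mono fun n => iSup_mono fun t => iSup_mono fun ht => ?_
  apply Finset.sum_le_sum
  intro i hi
  have hi := Finset.mem_range.1 hi
  apply ENNReal.ofReal_le_ofReal
  have h1 := abs_le.1 (h (t i) (part_mem ht i hi.le))
  have h2 := abs_le.1 (h (t (i + 1)) (part_mem ht (i + 1) hi))
  rw [Real.dist_eq, Real.dist_eq]
  have h3 := abs_le.1 (le_refl |g (t (i + 1)) - g (t i)|)
  have : |f (t (i + 1)) - f (t i)| ≤ |g (t (i + 1)) - g (t i)| + c := by
    rw [abs_le]; constructor <;> linarith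
  linarith

/-! ### Finiteness -/

def Good (f : ℝ → ℝ) (c : ℝ) (S : Set ℝ) : Prop :=
  ∃ p q : ℝ → ℝ, Monotone p ∧ Monotone q ∧ ∀ x ∈ S, |p x - q x - f x| ≤ c / 2

lemma good_ext {f : ℝ → ℝ} {c : ℝ} {S S' U : Set ℝ} (h : Good f c S) (v : ℝ)
    (hv : ∀ x ∈ S', |v - f x| ≤ c / 2) (hlt : ∀ x ∈ S, ∀ y ∈ S', x < y)
    (hU : ∀ x ∈ U, x ∈ S ∨ x ∈ S') : Good f c U := by
  classical
  obtain ⟨p, q, hp, hq, hg⟩ := h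
  rcases S'.eq_empty_or_nonempty with he | ⟨y, hy⟩
  · refine ⟨p, q, hp, hq, fun x hx => ?_⟩
    rcases hU x hx with h | h
    · exact hg x h
    · simp [he] at h
  set D : ℝ → Prop := fun x => ∃ z ∈ S', z ≤ x with hD
  have key : ∀ r : ℝ → ℝ, Monotone r → ∀ e : ℝ, 0 ≤ e →
      Monotone (fun x => if D x then r y + e else r x) := by
    intro r hr e he s t hst
    by_cases h1 : D s
    · have h2 : D t := by
        obtain ⟨z, hz, hzs⟩ := h1
        exact ⟨z, hz, hzs.trans hst⟩
      simp [h1, h2]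
    · by_cases h2 : D t
      · simp only [h1, h2, if_true, if_false]
        have : s < y := by
          by_contra hc
          exact h1 ⟨y, hy, not_lt.1 hc⟩
        have := hr this.le
        linarith
      · simp only [h1, h2, if_false]
        exact hr hst
  refine ⟨_, _, key p hp (max (v - (p y - q y)) 0) (le_max_right _ _),
    key q hq (max (-(v - (p y - q y))) 0) (le_max_right _ _), fun x hx => ?_⟩
  by_cases hDx : D x
  · have hx' : x ∈ S' := by
      rcases hU x hx with h | h
      · obtain ⟨z, hz, hzx⟩ := hDx
        exact absurd (hlt x h z hz) (not_lt.2 hzx)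
      · exact h
    simp only [hDx, if_true]
    have h1 : p y + max (v - (p y - q y)) 0 - (q y + max (-(v - (p y - q y))) 0) = v := by
      rcases le_total (v - (p y - q y)) 0 with h | h
      · rw [max_eq_right h, max_eq_left (by linarith)]; ring
      · rw [max_eq_left h, max_eq_right (by linarith)]; ring
    rw [h1]
    exact hv x hx'
  · have hx' : x ∈ S := by
      rcases hU x hx with h | h
      · exact h
      · exact absurd ⟨x, h, le_rfl⟩ hDx
    simp only [hDx, if_false]
    exact hg x hx'

lemma good_Icc (a b : ℝ) (hab : a < b) (f : ℝ → ℝ)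
    (hf : Cadlag f a b) (c : ℝ) (hc : 0 < c) : Good f c (Icc a b) := by
  set Z : Set ℝ := {t | t ∈ Icc a b ∧ Good f c (Icc a t)} with hZ
  have haZ : a ∈ Z := by
    refine ⟨⟨le_rfl, hab.le⟩, fun _ => f a, fun _ => 0, monotone_const, monotone_const, ?_⟩
    intro x hx
    have : x = a := le_antisymm hx.2 hx.1
    subst this
    simp; linarith
  have hbdd : BddAbove Z := ⟨b, fun t ht => ht.1.2⟩
  set τ := sSup Z with hτ
  have haτ : a ≤ τ := le_csSup hbdd haZ
  have hτb : τ ≤ b := csSup_le ⟨a, haZ⟩ fun t ht => ht.1.2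
  have hgτ : Good f c (Icc a τ) := by
    rcases haτ.eq_or_lt with h | h
    · rw [← h]; exact haZ.2
    · obtain ⟨l, hl⟩ := hf.2 τ ⟨h, hτb⟩
      have h1 : ∀ᶠ x in nhdsWithin τ (Iio τ), |l - f x| ≤ c / 2 := by
        have := hl.eventually (Metric.closedBall_mem_nhds l (half_pos hc))
        filter_upwards [this] with x hx
        rw [dist_comm, Real.dist_eq] at hx
        exact hx
      obtain ⟨m, hm, hm2⟩ := (mem_nhdsLT_iff_exists_Ioo_subset).1 h1
      obtain ⟨s, hs, hms⟩ := exists_lt_of_lt_csSup ⟨a, haZ⟩ (show m < sSup Z from hm)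
      have hsτ : s ≤ τ := le_csSup hbdd hs
      have g1 : Good f c (Ico a τ) := by
        refine good_ext (S := Icc a s) (S' := Ioo s τ) hs.2 l ?_ ?_ ?_
        · intro x hx
          exact hm2 ⟨hms.trans hx.1, hx.2⟩
        · intro x hx y hy
          exact hx.2.trans_lt hy.1
        · intro x hx
          rcases le_or_gt x s with h | h
          · left; exact ⟨hx.1, h⟩
          · right; exact ⟨h, hx.2⟩
      refine good_ext (S := Ico a τ) (S' := {τ}) g1 (f τ) ?_ ?_ ?_
      · intro x hx
        rw [mem_singleton_iff.1 hx]
        simp; linarith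
      · intro x hx y hy
        rw [mem_singleton_iff.1 hy]
        exact hx.2
      · intro x hx
        rcases hx.2.eq_or_lt with h | h
        · right; exact h
        · left; exact ⟨hx.1, h⟩
  rcases hτb.eq_or_lt with h | h
  · rwa [h] at hgτ
  exfalso
  have h1 : ∀ᶠ x in nhdsWithin τ (Ioi τ), |f τ - f x| ≤ c / 2 := by
    have := (hf.1 τ ⟨haτ, h⟩).eventually (Metric.closedBall_mem_nhds (f τ) (half_pos hc))
    filter_upwards [this] with x hx
    rw [dist_comm, Real.dist_eq] at hx
    exact hx
  obtain ⟨m, hm, hm2⟩ := (mem_nhdsGT_iff_exists_Ioc_subset).1 h1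
  have hm : τ < m := hm
  have hu : min m b ∈ Z := by
    refine ⟨⟨haτ.trans (le_min hm.le h.le), min_le_right _ _⟩, ?_⟩
    refine good_ext (S := Icc a τ) (S' := Ioc τ (min m b)) hgτ (f τ) ?_ ?_ ?_
    · intro x hx
      exact hm2 ⟨hx.1, hx.2.trans (min_le_left _ _)⟩
    · intro x hx y hy
      exact hx.2.trans_lt hy.1
    · intro x hx
      rcases le_or_gt x τ with h | h
      · left; exact ⟨hx.1, h⟩
      · right; exact ⟨h, hx.2⟩
  exact absurd (le_csSup hbdd hu) (not_le.2 (lt_min hm h))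

lemma tvc_ne_top (a b : ℝ) (hab : a < b) (f : ℝ → ℝ)
    (hf : Cadlag f a b) (c : ℝ) (hc : 0 < c) : TVc f c a b ≠ ⊤ := by
  obtain ⟨p, q, hp, hq, hg⟩ := good_Icc a b hab f hf c hc
  exact ne_top_of_le_ne_top ENNReal.ofReal_ne_top
    ((tvc_le_tvar f _ a b c hg).trans (tvar_le_of_mono p q hp hq a b))

/-! ### Properties of the truncated variation as a function of the right endpoint -/

lemma tvc_mono (f : ℝ → ℝ) (c a : ℝ) {s t : ℝ} (h : s ≤ t) : TVc f c a s ≤ TVc f c a t := by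
  unfold TVc
  refine iSup_mono fun n => iSup_mono fun u => ?_
  exact iSup_mono' fun hu => ⟨⟨hu.1, hu.2.1.trans h, hu.2.2⟩, le_rfl⟩

lemma le_tvc (f : ℝ → ℝ) (c a b : ℝ) (n : ℕ) (t : ℕ → ℝ) (h : IsPart a b n t) :
    ∑ i ∈ Finset.range n, ENNReal.ofReal (dist (f (t (i + 1))) (f (t i)) - c) ≤ TVc f c a b :=
  le_iSup_of_le n (le_iSup_of_le t (le_iSup_of_le h le_rfl))

lemma tvc_self (f : ℝ → ℝ) (c a : ℝ) : TVc f c a a = 0 := by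
  rw [← nonpos_iff_eq_zero]
  refine iSup_le fun n => iSup_le fun t => iSup_le fun ht => ?_
  have : n = 0 := by
    by_contra hn
    have h1 := part_mem ht 0 (by omega)
    have h2 := part_mem ht 1 (by omega)
    have h3 := ht.2.2 0 (by omega)
    simp only [zero_add] at h3
    linarith
  subst this
  simp

/-- Appending one point to a partition. -/
lemma append_part {a s t : ℝ} {n : ℕ} {u : ℕ → ℝ} (h : IsPart a s n u) (hst : s ≤ t)
    (hlt : u n < t) : IsPart a t (n + 1) (fun i => if i ≤ n then u i else t) := by
  refine ⟨by simpa using h.1, by simp, fun i hi => ?_⟩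
  rcases Nat.lt_succ_iff_lt_or_eq.1 hi with h1 | h1
  · have := h.2.2 i h1
    have h2 : i ≤ n := h1.le
    have h3 : i + 1 ≤ n := h1
    simpa [h2, h3] using this
  · subst h1
    simpa using hlt

lemma append_sum (f : ℝ → ℝ) (c t : ℝ) (n : ℕ) (u : ℕ → ℝ) :
    ∑ i ∈ Finset.range (n + 1), ENNReal.ofReal
      (dist (f ((fun i => if i ≤ n then u i else t) (i + 1)))
        (f ((fun i => if i ≤ n then u i else t) i)) - c)
    = ∑ i ∈ Finset.range n, ENNReal.ofReal (dist (f (u (i + 1))) (f (u i)) - c)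
      + ENNReal.ofReal (dist (f t) (f (u n)) - c) := by
  rw [Finset.sum_range_succ]
  congr 1
  · apply Finset.sum_congr rfl
    intro i hi
    have hi := Finset.mem_range.1 hi
    have h2 : i ≤ n := hi.le
    have h3 : i + 1 ≤ n := hi
    simp [h2, h3]
  · simp

lemma tvc_super (f : ℝ → ℝ) (c a : ℝ) {s t : ℝ} (has : a ≤ s) (hst : s < t) :
    TVc f c a s + ENNReal.ofReal (dist (f t) (f s) - c) ≤ TVc f c a t := by
  haveI : Nonempty (Σ' (n : ℕ) (u : ℕ → ℝ), IsPart a s n u) :=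
    ⟨⟨0, fun _ => s, has, le_rfl, fun i hi => absurd hi (by omega)⟩⟩
  have key : ∀ (n : ℕ) (u : ℕ → ℝ), IsPart a s n u → u n = s →
      ∑ i ∈ Finset.range n, ENNReal.ofReal (dist (f (u (i + 1))) (f (u i)) - c)
        + ENNReal.ofReal (dist (f t) (f s) - c) ≤ TVc f c a t := by
    intro n u hu hus
    have h1 := le_tvc f c a t _ _ (append_part hu hst.le (hus ▸ hst))
    rw [append_sum, hus] at h1
    exact h1
  have key2 : ∀ x : Σ' (n : ℕ) (u : ℕ → ℝ), IsPart a s n u,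
      ∑ i ∈ Finset.range x.1, ENNReal.ofReal (dist (f (x.2.1 (i + 1))) (f (x.2.1 i)) - c)
        + ENNReal.ofReal (dist (f t) (f s) - c) ≤ TVc f c a t := by
    rintro ⟨n, u, hu⟩
    rcases hu.2.1.eq_or_lt with h | h
    · exact key n u hu h
    · have h1 := key (n + 1) _ (append_part hu le_rfl h) (by simp)
      rw [append_sum] at h1
      refine le_trans ?_ h1
      gcongr
      exact le_self_add
  have h3 : TVc f c a s = ⨆ x : Σ' (n : ℕ) (u : ℕ → ℝ), IsPart a s n u,
      ∑ i ∈ Finset.range x.1, ENNReal.ofReal (dist (f (x.2.1 (i + 1))) (f (x.2.1 i)) - c) := by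
    unfold TVc
    rw [iSup_psigma]
    refine iSup_congr fun n => ?_
    rw [iSup_psigma]
  rw [h3, ENNReal.iSup_add]
  exact iSup_le key2

lemma attain_aux (f : ℝ → ℝ) (c a b : ℝ) (y : ℝ) (hy : 0 ≤ y) :
    ∀ (n : ℕ) (u : ℕ → ℝ), IsPart a b n u →
      ENNReal.ofReal y <
        ∑ i ∈ Finset.range n, ENNReal.ofReal (dist (f (u (i + 1))) (f (u i)) - c) →
      ∃ s s', a ≤ s ∧ s < s' ∧ s' ≤ b ∧
        ENNReal.ofReal y < TVc f c a s + ENNReal.ofReal (|f s' - f s| - c) ∧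
        0 < |f s' - f s| - c := by
  intro n
  induction n with
  | zero => intro u _ h; simp at h
  | succ n ih =>
    intro u hu h
    have hn1 := hu.2.2 n (by omega)
    rw [Finset.sum_range_succ] at h
    rcases le_or_gt (|f (u (n + 1)) - f (u n)| - c) 0 with h0 | h0
    · rw [← Real.dist_eq] at h0
      rw [ENNReal.ofReal_of_nonpos h0, add_zero] at h
      exact ih u ⟨hu.1, (part_mem hu n (by omega)).2, fun i hi => hu.2.2 i (by omega)⟩ h
    · refine ⟨u n, u (n + 1), (part_mem hu n (by omega)).1, hn1, hu.2.1, ?_, h0⟩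
      rw [← Real.dist_eq]
      refine h.trans_le ?_
      gcongr
      exact le_tvc f c a (u n) n u ⟨hu.1, le_rfl, fun i hi => hu.2.2 i (by omega)⟩

/-! ### The main construction -/

lemma construct (a b : ℝ) (hab : a < b) (f T : ℝ → ℝ) (c : ℝ) (hc : 0 < c)
    (hTa : T a = 0) (hTm : ∀ s t, a ≤ s → s ≤ t → t ≤ b → T s ≤ T t)
    (hsup : ∀ s t, a ≤ s → s < t → t ≤ b → T s + (|f t - f s| - c) ≤ T t)
    (hatt : ∀ t, a ≤ t → t ≤ b → ∀ y, 0 ≤ y → y < T t →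
      ∃ s s', a ≤ s ∧ s < s' ∧ s' ≤ t ∧ y < T s + (|f s' - f s| - c)) :
    ∃ A B : ℝ → ℝ, MonotoneOn A (Icc a b) ∧ MonotoneOn B (Icc a b) ∧
      ∀ t ∈ Icc a b, T t + f t ≤ A t ∧ T t - f t ≤ B t ∧ A t + B t = c + 2 * T t := by
  classical
  have hT0 : ∀ t, a ≤ t → t ≤ b → 0 ≤ T t := fun t h1 h2 => hTa ▸ hTm a t le_rfl h1 h2
  have hcross : ∀ t, t ≤ b → ∀ r r', a ≤ r → r ≤ t → a ≤ r' → r' ≤ t →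
      (T r + f r) + (T r' - f r') ≤ c + 2 * T t := by
    intro t ht r r' h1 h2 h3 h4
    have e1 := hTm r t h1 h2 ht
    have e2 := hTm r' t h3 h4 ht
    rcases lt_trichotomy r r' with h | h | h
    · have := hsup r r' h1 h (h4.trans ht)
      have := neg_abs_le (f r' - f r)
      linarith
    · subst h; linarith
    · have := hsup r' r h3 h (h2.trans ht)
      have := le_abs_self (f r - f r')
      linarith
  set SA : ℝ → Set ℝ := fun t => (fun r => T r + f r) '' Icc a t with hSA
  set SB : ℝ → Set ℝ := fun t => (fun r => T r - f r) '' Icc a t with hSB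
  have hbA : ∀ t, t ≤ b → BddAbove (SA t) := by
    intro t ht
    refine ⟨c + 2 * T b - (T a - f a), ?_⟩
    rintro _ ⟨r, hr, rfl⟩
    have := hcross b le_rfl r a hr.1 (hr.2.trans ht) le_rfl hab.le
    simp only; linarith
  have hbB : ∀ t, t ≤ b → BddAbove (SB t) := by
    intro t ht
    refine ⟨c + 2 * T b - (T a + f a), ?_⟩
    rintro _ ⟨r, hr, rfl⟩
    have := hcross b le_rfl a r le_rfl hab.le hr.1 (hr.2.trans ht)
    simp only; linarith
  set A : ℝ → ℝ := fun t => sSup (SA t) with hA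
  set B : ℝ → ℝ := fun t => sSup (SB t) with hB
  have hAle : ∀ t, t ≤ b → ∀ r, a ≤ r → r ≤ t → T r + f r ≤ A t := fun t ht r h1 h2 =>
    le_csSup (hbA t ht) ⟨r, ⟨h1, h2⟩, rfl⟩
  have hBle : ∀ t, t ≤ b → ∀ r, a ≤ r → r ≤ t → T r - f r ≤ B t := fun t ht r h1 h2 =>
    le_csSup (hbB t ht) ⟨r, ⟨h1, h2⟩, rfl⟩
  have hAsup : ∀ t, a ≤ t → ∀ K, (∀ r, a ≤ r → r ≤ t → T r + f r ≤ K) → A t ≤ K := by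
    intro t ht K hK
    refine csSup_le ⟨_, a, ⟨le_rfl, ht⟩, rfl⟩ ?_
    rintro _ ⟨r, hr, rfl⟩
    exact hK r hr.1 hr.2
  have hBsup : ∀ t, a ≤ t → ∀ K, (∀ r, a ≤ r → r ≤ t → T r - f r ≤ K) → B t ≤ K := by
    intro t ht K hK
    refine csSup_le ⟨_, a, ⟨le_rfl, ht⟩, rfl⟩ ?_
    rintro _ ⟨r, hr, rfl⟩
    exact hK r hr.1 hr.2
  have hAm : ∀ s t, a ≤ s → s ≤ t → t ≤ b → A s ≤ A t := fun s t h1 h2 h3 =>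
    hAsup s h1 _ fun r h4 h5 => hAle t h3 r h4 (h5.trans h2)
  have hBm : ∀ s t, a ≤ s → s ≤ t → t ≤ b → B s ≤ B t := fun s t h1 h2 h3 =>
    hBsup s h1 _ fun r h4 h5 => hBle t h3 r h4 (h5.trans h2)
  have F1 : ∀ t, a ≤ t → t ≤ b → A t + B t ≤ c + 2 * T t := by
    intro t h1 h2
    have : A t ≤ c + 2 * T t - B t := by
      apply hAsup t h1
      intro r h3 h4
      have : B t ≤ c + 2 * T t - (T r + f r) := by
        apply hBsup t h1
        intro r' h5 h6
        have := hcross t h2 r r' h3 h4 h5 h6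
        linarith
      linarith
    linarith
  have F2 : ∀ t, a ≤ t → t ≤ b → 0 < T t → c + 2 * T t ≤ A t + B t := by
    intro t h1 h2 hpos
    have : ∀ y, y < T t → y ≤ (A t + B t - c) / 2 := by
      intro y hy
      obtain ⟨s, s', e1, e2, e3, e4⟩ := hatt t h1 h2 (max y 0) (le_max_right _ _)
        (max_lt hy hpos)
      have e5 := hsup s s' e1 e2 (e3.trans h2)
      have e6 := le_max_left y 0
      have e7 := hAle t h2 s e1 (e2.le.trans e3)
      have e8 := hBle t h2 s e1 (e2.le.trans e3)
      have e9 := hAle t h2 s' (e1.trans e2.le) e3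
      have e10 := hBle t h2 s' (e1.trans e2.le) e3
      rcases abs_cases (f s' - f s) with ⟨h, _⟩ | ⟨h, _⟩ <;> rw [h] at e4 e5 <;> linarith
    have := le_of_forall_lt_imp_le_of_dense this
    linarith
  -- the starting level
  set S0 : Set ℝ := {x | ∃ s, a ≤ s ∧ s ≤ b ∧ T s = 0 ∧ x = A s} ∪
    {x | ∃ t, a ≤ t ∧ t ≤ b ∧ 0 < T t ∧ x = c - B t} with hS0
  have hne : S0.Nonempty := ⟨A a, Or.inl ⟨a, le_rfl, hab.le, hTa, rfl⟩⟩
  have hbd : BddAbove S0 := by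
    refine ⟨max (A b) (c - B a), ?_⟩
    rintro x (⟨s, h1, h2, _, rfl⟩ | ⟨t, h1, h2, _, rfl⟩)
    · exact le_max_of_le_left (hAm s b h1 h2 le_rfl)
    · have := hBm a t le_rfl h1 h2
      exact le_max_of_le_right (by linarith)
  set A0 := sSup S0 with hA0
  have G1 : ∀ s, a ≤ s → s ≤ b → T s = 0 → A s ≤ A0 := fun s h1 h2 h3 =>
    le_csSup hbd (Or.inl ⟨s, h1, h2, h3, rfl⟩)
  have G2 : ∀ s, a ≤ s → s ≤ b → 0 < T s → c - B s ≤ A0 := fun s h1 h2 h3 =>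
    le_csSup hbd (Or.inr ⟨s, h1, h2, h3, rfl⟩)
  have ord : ∀ s t, a ≤ s → s ≤ b → a ≤ t → t ≤ b → T s = 0 → 0 < T t → s ≤ t := by
    intro s t h1 h2 h3 h4 h5 h6
    by_contra hlt
    have := hTm t s h3 (not_le.1 hlt).le h2
    linarith
  have G3 : ∀ t, a ≤ t → t ≤ b → 0 < T t → A0 ≤ A t := by
    intro t h1 h2 h3
    refine csSup_le hne ?_
    rintro x (⟨s, h4, h5, h6, rfl⟩ | ⟨s, h4, h5, h6, rfl⟩)
    · exact hAm s t h4 (ord s t h4 h5 h1 h2 h6 h3) h2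
    · rcases le_total s t with h | h
      · have := F2 s h4 h5 h6
        have := hAm s t h4 h h2
        linarith
      · have := F2 t h1 h2 h3
        have := hBm t s h1 h h5
        linarith
  have G4 : ∀ t, a ≤ t → t ≤ b → T t = 0 → A0 ≤ c - B t := by
    intro t h1 h2 h3
    refine csSup_le hne ?_
    rintro x (⟨s, h4, h5, h6, rfl⟩ | ⟨s, h4, h5, h6, rfl⟩)
    · rcases le_total s t with h | h
      · have := F1 t h1 h2
        have := hAm s t h4 h h2
        linarith
      · have := F1 s h4 h5
        have := hBm t s h1 h h5
        linarith
    · have := hBm t s h1 (ord t s h1 h2 h4 h5 h3 h6) h5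
      linarith
  refine ⟨fun t => if 0 < T t then A t else A0, fun t => if 0 < T t then B t else c - A0,
    ?_, ?_, ?_⟩
  · intro s hs t ht hst
    have hm := hTm s t hs.1 hst ht.2
    by_cases h1 : 0 < T s
    · have h2 : 0 < T t := h1.trans_le hm
      simpa only [h1, h2, if_true] using hAm s t hs.1 hst ht.2
    · by_cases h2 : 0 < T t
      · simpa only [h1, h2, if_true, if_false] using G3 t ht.1 ht.2 h2
      · simp [h1, h2]
  · intro s hs t ht hst
    have hm := hTm s t hs.1 hst ht.2
    by_cases h1 : 0 < T s
    · have h2 : 0 < T t := h1.trans_le hm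
      simpa only [h1, h2, if_true] using hBm s t hs.1 hst ht.2
    · by_cases h2 : 0 < T t
      · simp only [h1, h2, if_true, if_false]
        have := G2 t ht.1 ht.2 h2
        linarith
      · simp [h1, h2]
  · intro t ht
    have e1 := hAle t ht.2 t ht.1 le_rfl
    have e2 := hBle t ht.2 t ht.1 le_rfl
    by_cases h1 : 0 < T t
    · simp only [h1, if_true]
      have := F1 t ht.1 ht.2
      have := F2 t ht.1 ht.2 h1
      exact ⟨e1, e2, by linarith⟩
    · simp only [h1, if_false]
      have h0 : T t = 0 := le_antisymm (not_lt.1 h1) (hT0 t ht.1 ht.2)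
      have := G1 t ht.1 ht.2 h0
      have := G4 t ht.1 ht.2 h0
      exact ⟨by linarith, by linarith, by linarith⟩

lemma exists_rc (a b : ℝ) (hab : a < b) (A : ℝ → ℝ) (hA : MonotoneOn A (Icc a b)) :
    ∃ P : ℝ → ℝ, Monotone P ∧ P b = A b ∧ A a ≤ P a ∧
      (∀ t, Tendsto P (nhdsWithin t (Ioi t)) (nhds (P t))) ∧
      (∀ t ∈ Ico a b, Tendsto A (nhdsWithin t (Ioi t)) (nhds (P t))) := by
  set cl : ℝ → ℝ := fun t => max a (min t b) with hcl
  have hmem : ∀ t, cl t ∈ Icc a b := fun t =>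
    ⟨le_max_left _ _, max_le hab.le (min_le_right _ _)⟩
  have hclm : Monotone cl := fun s t h => max_le_max le_rfl (min_le_min h le_rfl)
  have hid : ∀ t ∈ Icc a b, cl t = t := fun t ht => by
    simp only [hcl]; rw [min_eq_left ht.2, max_eq_right ht.1]
  have hM : Monotone (fun t => A (cl t)) := fun s t h => hA (hmem s) (hmem t) (hclm h)
  refine ⟨Function.rightLim (fun t => A (cl t)), hM.rightLim, ?_, ?_, ?_, ?_⟩
  · refine tendsto_nhds_unique (hM.tendsto_rightLim b) ?_
    refine tendsto_const_nhds.congr' ?_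
    filter_upwards [self_mem_nhdsWithin] with x hx
    have hx : b < x := hx
    simp only [hcl]
    rw [min_eq_right hx.le, max_eq_right hab.le]
  · have := hM.le_rightLim (le_refl a)
    simp only [hid a ⟨le_rfl, hab.le⟩] at this
    exact this
  · intro t
    have := (hM.stieltjesFunction).right_continuous t
    have h2 := this.tendsto.mono_left (nhdsWithin_mono t Ioi_subset_Ici_self)
    exact h2
  · intro t ht
    refine (hM.tendsto_rightLim t).congr' ?_
    filter_upwards [Ioc_mem_nhdsGT ht.2] with x hx
    rw [hid x ⟨ht.1.trans hx.1.le, hx.2⟩]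

end OptApprox

open OptApprox in
/-- There is a càdlàg function `fc` within uniform distance `c/2` of `f`
whose total variation equals `TV^c(f,[a,b])`; it attains the infimum of total variations
over the ball of radius `c/2` around `f`. -/
theorem exists_optimal_approx (a b : ℝ) (hab : a < b) (f : ℝ → ℝ)
    (hf : Cadlag f a b) (c : ℝ) (hc : 0 < c) :
    ∃ fc : ℝ → ℝ, Cadlag fc a b ∧
      (∀ t ∈ Set.Icc a b, |fc t - f t| ≤ c / 2) ∧
      TVar fc a b = TVc f c a b ∧
      (∀ g : ℝ → ℝ, (∀ t ∈ Set.Icc a b, |g t - f t| ≤ c / 2) →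
        TVc f c a b ≤ TVar g a b) := by
  have hfin : ∀ t, t ≤ b → TVc f c a t ≠ ⊤ := fun t ht =>
    ne_top_of_le_ne_top (tvc_ne_top a b hab f hf c hc) (tvc_mono f c a ht)
  set T : ℝ → ℝ := fun t => (TVc f c a t).toReal with hT
  have hTof : ∀ t, t ≤ b → TVc f c a t = ENNReal.ofReal (T t) := fun t ht =>
    (ENNReal.ofReal_toReal (hfin t ht)).symm
  have hT0 : ∀ t, 0 ≤ T t := fun t => ENNReal.toReal_nonneg
  obtain ⟨A, B, hAm, hBm, hAB⟩ := construct a b hab f T c hc (by simp [hT, tvc_self])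
    (fun s t _ h2 h3 => ENNReal.toReal_mono (hfin t h3) (tvc_mono f c a h2))
    (by
      intro s t h1 h2 h3
      have h := tvc_super f c a h1 h2
      rw [hTof t h3, hTof s (h2.le.trans h3), Real.dist_eq] at h
      rcases le_total (|f t - f s| - c) 0 with h0 | h0
      · rw [ENNReal.ofReal_of_nonpos h0, add_zero, ENNReal.ofReal_le_ofReal_iff (hT0 t)] at h
        linarith
      · rwa [← ENNReal.ofReal_add (hT0 s) h0, ENNReal.ofReal_le_ofReal_iff (hT0 t)] at h)
    (by
      intro t h1 h2 y hy hyt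
      have h : ENNReal.ofReal y < TVc f c a t := by
        rw [hTof t h2]
        exact (ENNReal.ofReal_lt_ofReal_iff (hy.trans_lt hyt)).2 hyt
      unfold TVc at h
      simp only [lt_iSup_iff] at h
      obtain ⟨n, u, hu, hlt⟩ := h
      obtain ⟨s, s', e1, e2, e3, e4, e5⟩ := attain_aux f c a t y hy n u hu hlt
      refine ⟨s, s', e1, e2, e3, ?_⟩
      rw [hTof s ((e2.le.trans e3).trans h2), ← ENNReal.ofReal_add (hT0 s) e5.le] at e4
      exact ENNReal.ofReal_lt_ofReal_iff_of_nonneg hy |>.1 e4)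
  have hTa : T a = 0 := by simp [hT, tvc_self]
  obtain ⟨P, hPm, hPb, hPa, hPr, hPA⟩ := exists_rc a b hab A hAm
  obtain ⟨Q, hQm, hQb, hQa, hQr, hQB⟩ := exists_rc a b hab B hBm
  have hclose : ∀ t ∈ Icc a b, (A t - B t) / 2 - f t ∈ Icc (-(c / 2)) (c / 2) := by
    intro t ht
    obtain ⟨h1, h2, h3⟩ := hAB t ht
    constructor <;> linarith
  have hd : ∀ t ∈ Set.Icc a b, |(P t / 2 - Q t / 2) - f t| ≤ c / 2 := by
    intro t ht
    rw [abs_le]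
    rcases ht.2.eq_or_lt with h | h
    · subst h
      have := hclose t ht
      rw [hPb, hQb]
      constructor <;> linarith [this.1, this.2]
    · have htI : t ∈ Ico a b := ⟨ht.1, h⟩
      have hlim : Tendsto (fun x => (A x - B x) / 2 - f x) (nhdsWithin t (Ioi t))
          (nhds ((P t - Q t) / 2 - f t)) :=
        (((hPA t htI).sub (hQB t htI)).div_const 2).sub (hf.1 t htI)
      have := isClosed_Icc.mem_of_tendsto hlim (by
        filter_upwards [Ioc_mem_nhdsGT h] with x hx
        exact hclose x ⟨ht.1.trans hx.1.le, hx.2⟩)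
      constructor <;> linarith [this.1, this.2]
  have hP2 : Monotone fun t => P t / 2 := fun s t h => by
    have := hPm h; simp only; linarith
  have hQ2 : Monotone fun t => Q t / 2 := fun s t h => by
    have := hQm h; simp only; linarith
  refine ⟨fun t => P t / 2 - Q t / 2, ⟨?_, ?_⟩, hd, ?_, fun g hg => tvc_le_tvar f g a b c hg⟩
  · intro t _
    exact ((hPr t).div_const 2).sub ((hQr t).div_const 2)
  · intro t _
    exact ⟨_, (hP2.tendsto_leftLim t).sub (hQ2.tendsto_leftLim t)⟩
  · refine le_antisymm ?_ (tvc_le_tvar f _ a b c hd)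
    refine (tvar_le_of_mono _ _ hP2 hQ2 a b).trans ?_
    rw [hTof b le_rfl]
    apply ENNReal.ofReal_le_ofReal
    have h1 := (hAB a ⟨le_rfl, hab.le⟩).2.2
    have h2 := (hAB b ⟨hab.le, le_rfl⟩).2.2
    rw [hPb, hQb]
    linarith
end

section
/- For any f : [a,b] → ℝ^N càdlàg with the L¹ metric ρ(x,y) = Σ_{i=1}^N |x_i − y_i|, and any c > 0, inf{ TV(g,[a,b]) : sup_t ρ(f(t),g(t)) ≤ c/2 } ≤ inf{ Σ_{i=1}^N TV^{c_i}(f_i,[a,b]) : c_1,...,c_N > 0, c_1 + ... + c_N = c }, where f = (f_1,...,f_N). -/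
open Set Filter

/-- The `L¹` distance on `Fin N → ℝ`. -/
noncomputable def distL1 {N : ℕ} (x y : Fin N → ℝ) : ℝ := ∑ i, |x i - y i|

/-- Total variation with respect to the `L¹` metric. -/
noncomputable def TVarL1 {N : ℕ} (g : ℝ → (Fin N → ℝ)) (a b : ℝ) : ENNReal :=
  ⨆ (n : ℕ) (t : ℕ → ℝ) (_ : IsPart a b n t),
    ∑ i ∈ Finset.range n, ENNReal.ofReal (distL1 (g (t (i + 1))) (g (t i)))

/-- Truncated sum along a sequence of times. -/
noncomputable def SS (f : ℝ → ℝ) (c : ℝ) (m : ℕ) (s : ℕ → ℝ) : ℝ :=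
  ∑ i ∈ Finset.range m, max (|f (s (i + 1)) - f (s i)| - c) 0

/-- Dynamic programming state `(T, A, B)`. -/
noncomputable def dp (c : ℝ) (x : ℕ → ℝ) : ℕ → ℝ × ℝ × ℝ
  | 0 => (0, -x 0, x 0)
  | n + 1 =>
    let T := max (dp c x n).1 (max ((dp c x n).2.1 + x (n + 1) - c) ((dp c x n).2.2 - x (n + 1) - c))
    (T, max (dp c x n).2.1 (T - x (n + 1)), max (dp c x n).2.2 (T + x (n + 1)))

theorem dp_inv (c : ℝ) (hc : 0 < c) (x : ℕ → ℝ) (n : ℕ) :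
    (dp c x n).1 ≤ (dp c x n).2.1 + x n ∧ (dp c x n).1 ≤ (dp c x n).2.2 - x n ∧
    (dp c x n).2.2 - x n - c ≤ (dp c x n).1 ∧ (dp c x n).2.1 + x n - c ≤ (dp c x n).1 ∧
    (dp c x n).2.1 + (dp c x n).2.2 ≤ 2 * (dp c x n).1 + c := by
  induction n with
  | zero => simp [dp]; grind
  | succ n ih =>
    simp only [dp]
    generalize (dp c x n).1 = T at *
    generalize (dp c x n).2.1 = A at *
    generalize (dp c x n).2.2 = B at *
    generalize x (n+1) = z
    obtain ⟨T', hT⟩ : ∃ T', T' = max T (max (A + z - c) (B - z - c)) := ⟨_, rfl⟩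
    rw [← hT]
    have h1 : T ≤ T' := hT ▸ le_max_left _ _
    have h2 : A + z - c ≤ T' := hT ▸ le_max_of_le_right (le_max_left _ _)
    have h3 : B - z - c ≤ T' := hT ▸ le_max_of_le_right (le_max_right _ _)
    obtain ⟨-, -, -, -, h⟩ := ih
    refine ⟨?_, ?_, ?_, ?_, ?_⟩
    · linarith [le_max_right A (T' - z)]
    · linarith [le_max_right B (T' + z)]
    · rcases max_cases B (T' + z) with h | h <;> linarith
    · rcases max_cases A (T' - z) with h | h <;> linarith
    · rcases max_cases B (T' + z) with h | h <;> rcases max_cases A (T' - z) with h | h <;> linarith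

theorem dp_mono (c : ℝ) (x : ℕ → ℝ) (n : ℕ) :
    (dp c x n).1 ≤ (dp c x (n+1)).1 ∧ (dp c x n).2.1 ≤ (dp c x (n+1)).2.1 ∧
    (dp c x n).2.2 ≤ (dp c x (n+1)).2.2 := by
  simp only [dp]
  exact ⟨le_max_left _ _, le_max_left _ _, le_max_left _ _⟩

theorem dp_path (c : ℝ) (hc : 0 < c) (x : ℕ → ℝ) (n : ℕ) :
    ∀ z, |z - x n| ≤ c / 2 → ∃ y : ℕ → ℝ, y n = z ∧ (∀ i ≤ n, |y i - x i| ≤ c / 2) ∧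
      ∑ i ∈ Finset.range n, |y (i + 1) - y i| ≤
        max (dp c x n).1 (max ((dp c x n).2.1 + z - c / 2) ((dp c x n).2.2 - z - c / 2)) := by
  induction n with
  | zero =>
    intro z hz
    refine ⟨fun _ => z, rfl, ?_, ?_⟩
    · intro i hi
      obtain rfl : i = 0 := by omega
      exact hz
    · simp [dp]
  | succ n ih =>
    intro z hz
    obtain ⟨w, hw, hW⟩ : ∃ w, |w - x n| ≤ c / 2 ∧ 
        |z - w| + max (dp c x n).1 (max ((dp c x n).2.1 + w - c / 2) ((dp c x n).2.2 - w - c / 2))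
        ≤ max (dp c x (n+1)).1 (max ((dp c x (n+1)).2.1 + z - c / 2) ((dp c x (n+1)).2.2 - z - c / 2)) := by
      obtain ⟨i1, i2, i3, i4, -⟩ := dp_inv c hc x n
      obtain ⟨m1, m2, m3⟩ := dp_mono c x n
      generalize (dp c x n).1 = T at *
      generalize (dp c x n).2.1 = A at *
      generalize (dp c x n).2.2 = B at *
      generalize (dp c x (n+1)).1 = T' at *
      generalize (dp c x (n+1)).2.1 = A' at *
      generalize (dp c x (n+1)).2.2 = B' at *
      obtain ⟨M, hM⟩ : ∃ M, M = max T' (max (A' + z - c / 2) (B' - z - c / 2)) := ⟨_, rfl⟩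
      rw [← hM]
      have h1 : T' ≤ M := hM ▸ le_max_left _ _
      have h2 : A' + z - c / 2 ≤ M := hM ▸ le_max_of_le_right (le_max_left _ _)
      have h3 : B' - z - c / 2 ≤ M := hM ▸ le_max_of_le_right (le_max_right _ _)
      rcases le_or_gt z (x n + c / 2) with hz1 | hz1
      · rcases le_or_gt (x n - c / 2) z with hz2 | hz2
        · refine ⟨z, abs_le.2 ⟨by linarith, by linarith⟩, ?_⟩
          rw [sub_self, abs_zero, zero_add]
          exact max_le (by linarith) (max_le (by linarith) (by linarith))
        · refine ⟨x n - c / 2, abs_le.2 ⟨by linarith, by linarith⟩, ?_⟩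
          rw [abs_of_neg (by linarith), ← le_sub_iff_add_le']
          exact max_le (by linarith) (max_le (by linarith) (by linarith))
      · refine ⟨x n + c / 2, abs_le.2 ⟨by linarith, by linarith⟩, ?_⟩
        rw [abs_of_pos (by linarith), ← le_sub_iff_add_le']
        exact max_le (by linarith) (max_le (by linarith) (by linarith))
    obtain ⟨y, y1, y2, y3⟩ := ih w hw
    refine ⟨fun i => if i ≤ n then y i else z, by simp, ?_, ?_⟩
    · intro i hi
      by_cases h : i ≤ n
      · simpa [h] using y2 i h
      · obtain rfl : i = n + 1 := by omega
        simpa using hz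
    · rw [Finset.sum_range_succ]
      have : ∑ i ∈ Finset.range n, |(if i + 1 ≤ n then y (i+1) else z) - (if i ≤ n then y i else z)|
          = ∑ i ∈ Finset.range n, |y (i + 1) - y i| := by
        apply Finset.sum_congr rfl
        intro i hi
        have := Finset.mem_range.1 hi
        rw [if_pos (by omega), if_pos (by omega)]
      rw [this]
      simp only [le_refl, if_true, y1]
      rw [if_neg (by omega)]
      linarith

theorem dp_end (c : ℝ) (hc : 0 < c) (x : ℕ → ℝ) (n : ℕ) :
    ∃ y : ℕ → ℝ, (∀ i ≤ n, |y i - x i| ≤ c / 2) ∧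
      ∑ i ∈ Finset.range n, |y (i + 1) - y i| ≤ (dp c x n).1 := by
  obtain ⟨i1, i2, i3, i4, i5⟩ := dp_inv c hc x n
  obtain ⟨y, -, h2, h3⟩ := dp_path c hc x n
    (max (x n - c / 2) ((dp c x n).2.2 - (dp c x n).1 - c / 2)) (by
      rw [abs_le]
      constructor
      · linarith [le_max_left (x n - c / 2) ((dp c x n).2.2 - (dp c x n).1 - c / 2)]
      · rw [sub_le_iff_le_add]
        exact max_le (by linarith) (by linarith))
  refine ⟨y, h2, h3.trans (max_le le_rfl (max_le ?_ ?_))⟩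
  · rcases max_cases (x n - c / 2) ((dp c x n).2.2 - (dp c x n).1 - c / 2) with h | h <;> linarith
  · linarith [le_max_right (x n - c / 2) ((dp c x n).2.2 - (dp c x n).1 - c / 2)]

theorem part_append (f : ℝ → ℝ) (c a b b' : ℝ) (hb : b < b') (m : ℕ) (s : ℕ → ℝ)
    (hs : IsPart a b m s) :
    ∃ s', IsPart a b' (m + 1) s' ∧ s' (m + 1) = b' ∧
      SS f c (m + 1) s' = SS f c m s + max (|f b' - f (s m)| - c) 0 := by
  obtain ⟨h1, h2, h3⟩ := hs
  refine ⟨fun k => if k ≤ m then s k else b', ⟨by simpa using h1, by simp, ?_⟩, by simp, ?_⟩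
  · intro i hi
    by_cases h : i + 1 ≤ m
    · simp only [h, if_true, show i ≤ m by omega]
      exact h3 i (by omega)
    · obtain rfl : i = m := by omega
      simp; linarith
  · unfold SS
    rw [Finset.sum_range_succ]
    congr 1
    · apply Finset.sum_congr rfl
      intro i hi
      have := Finset.mem_range.1 hi
      simp only
      rw [if_pos (by omega), if_pos (by omega)]
    · simp

theorem dp_real (f : ℝ → ℝ) (c a : ℝ) (t : ℕ → ℝ) (ha : a ≤ t 0) (n : ℕ)
    (ht : ∀ i < n, t i < t (i + 1)) :
    (∃ m s, IsPart a (t n) m s ∧ s m = t n ∧ (dp c (fun i => f (t i)) n).1 ≤ SS f c m s) ∧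
    (∃ m s, IsPart a (t n) m s ∧ (dp c (fun i => f (t i)) n).2.1 ≤ SS f c m s - f (s m)) ∧
    (∃ m s, IsPart a (t n) m s ∧ (dp c (fun i => f (t i)) n).2.2 ≤ SS f c m s + f (s m)) := by
  induction n with
  | zero =>
    have : IsPart a (t 0) 0 t := ⟨ha, le_rfl, by simp⟩
    exact ⟨⟨0, t, this, rfl, by simp [dp, SS]⟩, ⟨0, t, this, by simp [dp, SS]⟩,
      ⟨0, t, this, by simp [dp, SS]⟩⟩
  | succ n ih =>
    obtain ⟨⟨m1, s1, p1, -, q1⟩, ⟨m2, s2, p2, q2⟩, ⟨m3, s3, p3, q3⟩⟩ :=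
      ih (fun i hi => ht i (by omega))
    have hlt := ht n (by omega)
    have key : ∃ m s, IsPart a (t (n+1)) m s ∧ s m = t (n+1) ∧
        (dp c (fun i => f (t i)) (n+1)).1 ≤ SS f c m s := by
      have e : (dp c (fun i => f (t i)) (n+1)).1 = max (dp c (fun i => f (t i)) n).1
        (max ((dp c (fun i => f (t i)) n).2.1 + f (t (n + 1)) - c)
          ((dp c (fun i => f (t i)) n).2.2 - f (t (n + 1)) - c)) := rfl
      rw [e]
      rcases max_choice (dp c (fun i => f (t i)) n).1
        (max ((dp c (fun i => f (t i)) n).2.1 + f (t (n + 1)) - c)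
          ((dp c (fun i => f (t i)) n).2.2 - f (t (n + 1)) - c)) with h | h
      · obtain ⟨s, h1, h2, h3⟩ := part_append f c _ _ _ hlt _ _ p1
        refine ⟨_, s, h1, h2, ?_⟩
        rw [h, h3]
        linarith [le_max_right (|f (t (n+1)) - f (s1 m1)| - c) 0]
      · rw [h]
        rcases max_choice ((dp c (fun i => f (t i)) n).2.1 + f (t (n + 1)) - c)
          ((dp c (fun i => f (t i)) n).2.2 - f (t (n + 1)) - c) with h | h
        · obtain ⟨s, h1, h2, h3⟩ := part_append f c _ _ _ hlt _ _ p2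
          refine ⟨_, s, h1, h2, ?_⟩
          rw [h, h3]
          linarith [le_max_left (|f (t (n+1)) - f (s2 m2)| - c) 0,
            le_abs_self (f (t (n+1)) - f (s2 m2))]
        · obtain ⟨s, h1, h2, h3⟩ := part_append f c _ _ _ hlt _ _ p3
          refine ⟨_, s, h1, h2, ?_⟩
          rw [h, h3]
          linarith [le_max_left (|f (t (n+1)) - f (s3 m3)| - c) 0,
            neg_abs_le (f (t (n+1)) - f (s3 m3))]
    refine ⟨key, ?_, ?_⟩
    · obtain ⟨m, s, h1, h2, h3⟩ := key
      have e : (dp c (fun i => f (t i)) (n+1)).2.1 = max (dp c (fun i => f (t i)) n).2.1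
        ((dp c (fun i => f (t i)) (n+1)).1 - f (t (n+1))) := rfl
      rw [e]
      rcases max_choice (dp c (fun i => f (t i)) n).2.1
        ((dp c (fun i => f (t i)) (n+1)).1 - f (t (n+1))) with h | h
      · exact ⟨m2, s2, ⟨p2.1, p2.2.1.trans hlt.le, p2.2.2⟩, h.le.trans q2⟩
      · exact ⟨m, s, h1, by rw [h, h2]; linarith⟩
    · obtain ⟨m, s, h1, h2, h3⟩ := key
      have e : (dp c (fun i => f (t i)) (n+1)).2.2 = max (dp c (fun i => f (t i)) n).2.2
        ((dp c (fun i => f (t i)) (n+1)).1 + f (t (n+1))) := rfl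
      rw [e]
      rcases max_choice (dp c (fun i => f (t i)) n).2.2
        ((dp c (fun i => f (t i)) (n+1)).1 + f (t (n+1))) with h | h
      · exact ⟨m3, s3, ⟨p3.1, p3.2.1.trans hlt.le, p3.2.2⟩, h.le.trans q3⟩
      · exact ⟨m, s, h1, by rw [h, h2]; linarith⟩

theorem SS_le (f : ℝ → ℝ) (c a b : ℝ) (hV : TVc f c a b ≠ ⊤) (m : ℕ) (s : ℕ → ℝ)
    (hs : IsPart a b m s) : SS f c m s ≤ (TVc f c a b).toReal := by
  rw [← ENNReal.ofReal_le_iff_le_toReal hV]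
  unfold SS
  rw [ENNReal.ofReal_sum_of_nonneg (fun _ _ => le_max_right _ _)]
  have : ∀ i ∈ Finset.range m, ENNReal.ofReal (max (|f (s (i + 1)) - f (s i)| - c) 0)
      = ENNReal.ofReal (dist (f (s (i + 1))) (f (s i)) - c) := by
    intro i _
    rw [ENNReal.ofReal_max]
    simp [Real.dist_eq]
  rw [Finset.sum_congr rfl this]
  unfold TVc
  exact le_iSup_of_le m (le_iSup_of_le s (le_iSup_of_le hs le_rfl))

theorem fin_case (f : ℝ → ℝ) (c a b : ℝ) (hc : 0 < c) (hV : TVc f c a b ≠ ⊤) (F : Finset ℝ) :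
    ∃ g : ℝ → ℝ, (∀ t, g t ∈ Icc (f t - c / 2) (f t + c / 2)) ∧
      ∀ n t, IsPart a b n t → (∀ i ≤ n, t i ∈ F) →
        ∑ i ∈ Finset.range n, |g (t (i + 1)) - g (t i)| ≤ (TVc f c a b).toReal := by
  classical
  obtain ⟨G, hG⟩ : ∃ G, G = F.filter (fun t => t ∈ Icc a b) := ⟨_, rfl⟩
  have hmem : ∀ n t, IsPart a b n t → (∀ i ≤ n, t i ∈ F) → ∀ i ≤ n, t i ∈ G := by
    intro n t ht hF i hi
    rw [hG, Finset.mem_filter]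
    refine ⟨hF i hi, ?_, ?_⟩
    · clear hF
      induction i with
      | zero => exact ht.1
      | succ k ih => exact (ih (by omega)).trans (ht.2.2 k (by omega)).le
    · have : ∀ j, j ≤ n → t (n - j) ≤ b := by
        intro j
        induction j with
        | zero => intro _; exact ht.2.1
        | succ k ih =>
          intro hk
          have := ht.2.2 (n - (k+1)) (by omega)
          rw [show n - (k+1) + 1 = n - k by omega] at this
          exact this.le.trans (ih (by omega))
      have := this (n - i) (by omega)
      rwa [show n - (n - i) = i by omega] at this
  have hself : ∀ t, f t ∈ Icc (f t - c / 2) (f t + c / 2) :=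
    fun t => ⟨by linarith, by linarith⟩
  rcases Nat.eq_zero_or_pos G.card with h0 | h0
  · refine ⟨f, hself, fun n t ht hF => ?_⟩
    have := hmem n t ht hF 0 (by omega)
    rw [Finset.card_eq_zero.1 h0] at this
    simp at this
  · obtain ⟨N, hN⟩ : ∃ N, G.card = N + 1 := ⟨G.card - 1, by omega⟩
    let e := G.orderIsoOfFin hN
    let u : ℕ → ℝ := fun i => if h : i < N + 1 then (e ⟨i, h⟩ : ℝ) else 0
    have hu : ∀ i < N, u i < u (i + 1) := by
      intro i hi
      simp only [u, dif_pos (show i < N + 1 by omega), dif_pos (show i + 1 < N + 1 by omega)]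
      have : e ⟨i, by omega⟩ < e ⟨i+1, by omega⟩ := e.strictMono (by simp)
      exact this
    have huG : ∀ i < N + 1, u i ∈ Icc a b := by
      intro i hi
      simp only [u, dif_pos hi]
      have h := (e ⟨i, hi⟩).2
      have hsub : ∀ r ∈ G, r ∈ Icc a b := by
        intro r hr
        rw [hG] at hr
        exact (Finset.mem_filter.1 hr).2
      exact hsub _ h
    let idx : ℝ → ℕ := fun s => if h : s ∈ G then (e.symm ⟨s, h⟩ : ℕ) else 0
    have hidx : ∀ s ∈ G, idx s ≤ N ∧ u (idx s) = s := by
      intro s hs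
      have : idx s = (e.symm ⟨s, hs⟩ : ℕ) := by simp [idx, hs]
      rw [this]
      refine ⟨by omega, ?_⟩
      simp only [u, Fin.is_lt, dif_pos, Fin.eta, OrderIso.apply_symm_apply]
    have hidxm : ∀ s ∈ G, ∀ s' ∈ G, s < s' → idx s ≤ idx s' := by
      intro s hs s' hs' h
      simp only [idx, dif_pos hs, dif_pos hs']
      have : e.symm ⟨s, hs⟩ ≤ e.symm ⟨s', hs'⟩ := e.symm.monotone h.le
      exact this
    obtain ⟨y, hy1, hy2⟩ := dp_end c hc (fun i => f (u i)) N
    obtain ⟨⟨m, s, p1, -, p2⟩, -⟩ := dp_real f c a u (huG 0 (by omega)).1 N hu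
    have hV' := SS_le f c a b hV m s ⟨p1.1, p1.2.1.trans (huG N (by omega)).2, p1.2.2⟩
    refine ⟨fun s => if s ∈ G then y (idx s) else f s, ?_, ?_⟩
    · intro t
      by_cases h : t ∈ G
      · simp only [h, if_true]
        obtain ⟨h1, h2⟩ := hidx t h
        have := hy1 _ h1
        simp only [h2] at this
        rw [abs_le] at this
        exact ⟨by linarith, by linarith⟩
      · simpa only [h, if_false] using hself t
    · intro n t ht hF
      have hm := hmem n t ht hF
      have : ∀ k ≤ n, ∑ i ∈ Finset.range k, |(if t (i+1) ∈ G then y (idx (t (i+1))) else f (t (i+1)))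
          - (if t i ∈ G then y (idx (t i)) else f (t i))| ≤
          ∑ i ∈ Finset.range (idx (t k)), |y (i + 1) - y i| := by
        intro k
        induction k with
        | zero => intro _; simp; exact Finset.sum_nonneg (fun _ _ => abs_nonneg _)
        | succ k ih =>
          intro hk
          rw [Finset.sum_range_succ, if_pos (hm (k+1) hk), if_pos (hm k (by omega))]
          have hle := hidxm _ (hm k (by omega)) _ (hm (k+1) hk) (ht.2.2 k (by omega))
          rw [← Finset.sum_range_add_sum_Ico _ hle]
          refine add_le_add (ih (by omega)) ?_
          have := dist_le_Ico_sum_dist y hle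
          simp only [Real.dist_eq] at this
          rw [abs_sub_comm]
          refine this.trans (le_of_eq (Finset.sum_congr rfl fun i _ => abs_sub_comm _ _))
      refine (this n le_rfl).trans (le_trans ?_ (hy2.trans (p2.trans hV')))
      apply Finset.sum_le_sum_of_subset_of_nonneg
      · exact Finset.range_subset_range.2 (hidx _ (hm n le_rfl)).1
      · exact fun _ _ _ => abs_nonneg _

theorem real_case (f : ℝ → ℝ) (c a b : ℝ) (hc : 0 < c) (hV : TVc f c a b ≠ ⊤) :
    ∃ g : ℝ → ℝ, (∀ t, |f t - g t| ≤ c / 2) ∧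
      ∀ n t, IsPart a b n t →
        ∑ i ∈ Finset.range n, |g (t (i + 1)) - g (t i)| ≤ (TVc f c a b).toReal := by
  classical
  let P : Set (ℝ → ℝ) := Set.pi univ (fun t => Icc (f t - c / 2) (f t + c / 2))
  have hP : IsCompact P := isCompact_univ_pi (fun t => isCompact_Icc)
  let K : Finset ℝ → Set (ℝ → ℝ) := fun F => P ∩ {g | ∀ n t, IsPart a b n t → (∀ i ≤ n, t i ∈ F) →
        ∑ i ∈ Finset.range n, |g (t (i + 1)) - g (t i)| ≤ (TVc f c a b).toReal}
  have hcl : ∀ F : Finset ℝ, IsClosed {g : ℝ → ℝ | ∀ n t, IsPart a b n t → (∀ i ≤ n, t i ∈ F) →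
        ∑ i ∈ Finset.range n, |g (t (i + 1)) - g (t i)| ≤ (TVc f c a b).toReal} := by
    intro F
    simp only [setOf_forall]
    refine isClosed_iInter fun n => isClosed_iInter fun t => isClosed_iInter fun _ =>
      isClosed_iInter fun _ => isClosed_le ?_ continuous_const
    fun_prop
  have hne : (⋂ F, K F).Nonempty := by
    apply IsCompact.nonempty_iInter_of_directed_nonempty_isCompact_isClosed
    · intro F G
      refine ⟨F ∪ G, ?_, ?_⟩
      · exact fun g hg => ⟨hg.1, fun n t ht h => hg.2 n t ht
          fun i hi => Finset.mem_union_left _ (h i hi)⟩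
      · exact fun g hg => ⟨hg.1, fun n t ht h => hg.2 n t ht
          fun i hi => Finset.mem_union_right _ (h i hi)⟩
    · intro F
      obtain ⟨g, h1, h2⟩ := fin_case f c a b hc hV F
      exact ⟨g, fun t _ => h1 t, h2⟩
    · exact fun F => hP.inter_right (hcl F)
    · exact fun F => (hP.inter_right (hcl F)).isClosed
  obtain ⟨g, hg⟩ := hne
  rw [mem_iInter] at hg
  refine ⟨g, fun t => ?_, fun n t ht => ?_⟩
  · have := (hg ∅).1 t (mem_univ t)
    rw [abs_le]
    exact ⟨by linarith [this.2], by linarith [this.1]⟩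
  · refine (hg ((Finset.range (n+1)).image t)).2 n t ht fun i hi => ?_
    exact Finset.mem_image_of_mem _ (Finset.mem_range.2 (by omega))

/-- For `f : [a,b] → ℝ^N` càdlàg with the `L¹` metric, the infimum of total
variations over the uniform `c/2`-ball around `f` is at most the infimum over splittings
`c = c_1 + ... + c_N` of the sums of coordinatewise truncated variations. -/
theorem tv_l1_upper_bound {N : ℕ} (a b : ℝ) (hab : a < b)
    (f : ℝ → (Fin N → ℝ)) (hf : Cadlag f a b) (c : ℝ) (hc : 0 < c) :
    (⨅ (g : ℝ → (Fin N → ℝ))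
        (_ : ∀ t ∈ Set.Icc a b, distL1 (f t) (g t) ≤ c / 2), TVarL1 g a b)
      ≤ ⨅ (cs : Fin N → ℝ) (_ : ∀ i, 0 < cs i) (_ : ∑ i, cs i = c),
          ∑ i, TVc (fun t => f t i) (cs i) a b := by
  refine le_iInf fun cs => le_iInf fun hcs => le_iInf fun hsum => ?_
  by_cases htop : ∃ i, TVc (fun t => f t i) (cs i) a b = ⊤
  · obtain ⟨i, hi⟩ := htop
    have : ∑ i, TVc (fun t => f t i) (cs i) a b = ⊤ :=
      ENNReal.sum_eq_top.2 ⟨i, Finset.mem_univ i, hi⟩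
    rw [this]
    exact le_top
  · push Not at htop
    choose g hg1 hg2 using fun i => real_case (fun t => f t i) (cs i) a b (hcs i) (htop i)
    refine iInf_le_of_le (fun t i => g i t) (iInf_le_of_le ?_ ?_)
    · intro t _
      unfold distL1
      calc ∑ i, |f t i - g i t| ≤ ∑ i, cs i / 2 := Finset.sum_le_sum fun i _ => hg1 i t
        _ = c / 2 := by rw [← Finset.sum_div, hsum]
    · unfold TVarL1
      refine iSup_le fun n => iSup_le fun t => iSup_le fun ht => ?_
      unfold distL1
      simp_rw [ENNReal.ofReal_sum_of_nonneg (fun _ _ => abs_nonneg _)]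
      rw [Finset.sum_comm]
      refine Finset.sum_le_sum fun i _ => ?_
      rw [← ENNReal.ofReal_sum_of_nonneg (fun _ _ => abs_nonneg _)]
      exact (ENNReal.ofReal_le_iff_le_toReal (htop i)).2 (hg2 i n t ht)
end

section
/- For a càdlàg function f : [a,b] → ℝ, c > 0, and the first downward-crossing time T_D := inf{ s ≥ a : sup_{t∈[a,s]} f(t) − f(s) ≥ c }, the upward truncated variation satisfies the splitting identity: UTV^c(f,[a,s]) = sup_{a ≤ t < u ≤ T_D ∧ s} max{f(u) − f(t) − c, 0} + UTV^c(f,[T_D ∧ s, s]). -/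
open Set Filter Classical

theorem Cadlag.bddAbove_image {f : ℝ → ℝ} {a b : ℝ} (hf : Cadlag f a b) :
    BddAbove (f '' Set.Icc a b) := by
  refine isCompact_Icc.induction_on (p := fun K => BddAbove (f '' K)) (by simp)
    (fun s t hst ht => ht.mono (Set.image_mono hst))
    (fun s t h1 h2 => by rw [Set.image_union]; exact h1.union h2) ?_
  intro x hx
  -- left neighbourhood
  have hL : ∃ C, ∀ᶠ y in nhdsWithin x (Set.Iio x), y ∈ Set.Icc a b → f y ≤ C := by
    rcases eq_or_lt_of_le hx.1 with h | h
    · refine ⟨0, ?_⟩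
      filter_upwards [self_mem_nhdsWithin] with y hy hy2
      exact absurd hy2.1 (by rw [h]; exact not_le.mpr hy)
    · obtain ⟨l, hl⟩ := hf.2 x ⟨h, hx.2⟩
      refine ⟨l + 1, ?_⟩
      filter_upwards [hl.eventually (gt_mem_nhds (show l < l + 1 by linarith))] with y hy _
      exact hy.le
  have hR : ∃ C, ∀ᶠ y in nhdsWithin x (Set.Ioi x), y ∈ Set.Icc a b → f y ≤ C := by
    rcases eq_or_lt_of_le hx.2 with h | h
    · refine ⟨0, ?_⟩
      filter_upwards [self_mem_nhdsWithin] with y hy hy2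
      exact absurd hy2.2 (by rw [← h]; exact not_le.mpr hy)
    · refine ⟨f x + 1, ?_⟩
      filter_upwards [(hf.1 x ⟨hx.1, h⟩).eventually
        (gt_mem_nhds (show f x < f x + 1 by linarith))] with y hy _
      exact hy.le
  obtain ⟨C1, h1⟩ := hL
  obtain ⟨C2, h2⟩ := hR
  rw [eventually_nhdsWithin_iff] at h1 h2
  refine ⟨{y | y ∈ Set.Icc a b → f y ≤ max (max C1 C2) (f x)} ∩ Set.Icc a b, ?_, ?_⟩
  · refine Filter.inter_mem (mem_nhdsWithin_of_mem_nhds ?_) self_mem_nhdsWithin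
    filter_upwards [h1, h2] with y hy1 hy2 hy
    rcases lt_trichotomy y x with h | h | h
    · exact (hy1 h hy).trans ((le_max_left _ _).trans (le_max_left _ _))
    · rw [h]; exact le_max_right _ _
    · exact (hy2 h hy).trans ((le_max_right _ _).trans (le_max_left _ _))
  · refine ⟨max (max C1 C2) (f x), ?_⟩
    rintro _ ⟨y, ⟨hy1, hy2⟩, rfl⟩
    exact hy1 hy2

theorem isPart_le {a b : ℝ} {n : ℕ} {t : ℕ → ℝ} (h : IsPart a b n t) :
    ∀ i ≤ n, a ≤ t i := by
  intro i
  induction i with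
  | zero => intro _; exact h.1
  | succ k ih => intro hk; exact (ih (by omega)).trans (h.2.2 k (by omega)).le

theorem utvc_sum_le {f : ℝ → ℝ} {c a b : ℝ} {n : ℕ} {t : ℕ → ℝ} (h : IsPart a b n t) :
    ∑ i ∈ Finset.range n, ENNReal.ofReal (f (t (i + 1)) - f (t i) - c) ≤ UTVc f c a b :=
  le_iSup_of_le n (le_iSup_of_le t (le_iSup_of_le h le_rfl))

theorem utvc_mono {f : ℝ → ℝ} {c a b a' b' : ℝ} (h : a' ≤ a) (h' : b ≤ b') :
    UTVc f c a b ≤ UTVc f c a' b' := by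
  refine iSup_le fun n => iSup_le fun t => iSup_le fun ht => utvc_sum_le ?_
  exact ⟨h.trans ht.1, ht.2.1.trans h', ht.2.2⟩

/-- Prepending one interval. -/
theorem utvc_cons {f : ℝ → ℝ} {c a s p q : ℝ} (hp : a ≤ p) (hpq : p < q) (hqs : q ≤ s) :
    ENNReal.ofReal (f q - f p - c) + UTVc f c q s ≤ UTVc f c a s := by
  have h0 : ENNReal.ofReal (f q - f p - c) ≤ UTVc f c a s := by
    have := utvc_sum_le (f := f) (c := c) (a := a) (b := s) (n := 1)
      (t := fun i => if i = 0 then p else q)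
      ⟨by simpa using hp, by simpa using hqs, by intro i hi; interval_cases i; simpa using hpq⟩
    simpa using this
  have : UTVc f c q s ≤ UTVc f c a s - ENNReal.ofReal (f q - f p - c) := by
    refine iSup_le fun n => iSup_le fun t => iSup_le fun ht => ?_
    refine ENNReal.le_sub_of_add_le_left ENNReal.ofReal_ne_top ?_
    rcases eq_or_lt_of_le ht.1 with h | h
    · have h2 : IsPart a s (n + 1) (fun i => if i = 0 then p else t (i - 1)) := by
        refine ⟨by simpa using hp, by simpa using ht.2.1, ?_⟩
        intro i hi
        rcases i with _ | i
        · simp [← h, hpq]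
        · simpa using ht.2.2 i (by omega)
      refine le_trans (le_of_eq ?_) (utvc_sum_le (f := f) (c := c) h2)
      rw [Finset.sum_range_succ', add_comm]
      simp [h]
    · have h2 : IsPart a s (n + 2)
          (fun i => if i = 0 then p else if i = 1 then q else t (i - 2)) := by
        refine ⟨by simpa using hp, by simpa using ht.2.1, ?_⟩
        intro i hi
        rcases i with _ | _ | i
        · simpa using hpq
        · simpa using h
        · simpa using ht.2.2 i (by omega)
      refine le_trans ?_ (utvc_sum_le (f := f) (c := c) h2)
      rw [Finset.sum_range_succ', Finset.sum_range_succ', add_comm]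
      simp only [Nat.add_eq_zero_iff, one_ne_zero, and_false, if_false, if_true, zero_add]
      refine add_le_add (le_trans (le_of_eq ?_) le_self_add) le_rfl
      refine Finset.sum_congr rfl fun i _ => ?_
      simp
  calc _ ≤ ENNReal.ofReal (f q - f p - c) + (UTVc f c a s - ENNReal.ofReal (f q - f p - c)) := by
        gcongr
    _ = _ := add_tsub_cancel_of_le h0

/-- Appending one interval. -/
theorem utvc_snoc {f : ℝ → ℝ} {c a p q : ℝ} (hp : a ≤ p) (hpq : p < q) :
    UTVc f c a p + ENNReal.ofReal (f q - f p - c) ≤ UTVc f c a q := by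
  have h0 : ENNReal.ofReal (f q - f p - c) ≤ UTVc f c a q := by
    refine le_trans ?_ (utvc_cons (f := f) (c := c) hp hpq le_rfl)
    exact le_self_add
  have : UTVc f c a p ≤ UTVc f c a q - ENNReal.ofReal (f q - f p - c) := by
    refine iSup_le fun n => iSup_le fun t => iSup_le fun ht => ?_
    refine ENNReal.le_sub_of_add_le_right ENNReal.ofReal_ne_top ?_
    rcases eq_or_lt_of_le ht.2.1 with h | h
    · have h2 : IsPart a q (n + 1) (fun i => if i ≤ n then t i else q) := by
        refine ⟨by simpa using ht.1, by simp, ?_⟩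
        intro i hi
        rcases Nat.lt_succ_iff_lt_or_eq.mp hi with h3 | h3
        · simpa [h3.le, Nat.succ_le_of_lt h3] using ht.2.2 i h3
        · subst h3; simp [h, hpq]
      refine le_trans (le_of_eq ?_) (utvc_sum_le (f := f) (c := c) h2)
      rw [Finset.sum_range_succ]
      congr 1
      · refine Finset.sum_congr rfl fun i hi => ?_
        have := Finset.mem_range.mp hi
        simp [this.le, Nat.succ_le_of_lt this]
      · simp [h]
    · have h2 : IsPart a q (n + 2)
          (fun i => if i ≤ n then t i else if i = n + 1 then p else q) := by
        refine ⟨by simpa using ht.1, by simp, ?_⟩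
        intro i hi
        rcases lt_trichotomy i n with h3 | h3 | h3
        · simpa [h3.le, Nat.succ_le_of_lt h3] using ht.2.2 i h3
        · subst h3; simp [h]
        · obtain rfl : i = n + 1 := by omega
          simp [hpq]
      refine le_trans ?_ (utvc_sum_le (f := f) (c := c) h2)
      rw [Finset.sum_range_succ, Finset.sum_range_succ]
      refine add_le_add (le_trans (le_of_eq ?_) le_self_add) (le_of_eq ?_)
      · refine Finset.sum_congr rfl fun i hi => ?_
        have := Finset.mem_range.mp hi
        simp [this.le, Nat.succ_le_of_lt this]
      · simp
  calc _ ≤ (UTVc f c a q - ENNReal.ofReal (f q - f p - c)) + ENNReal.ofReal (f q - f p - c) := by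
        gcongr
    _ = _ := tsub_add_cancel_of_le h0

/-- `S` is dominated by one upward increment in `[a, x]`. -/
def OneInc (f : ℝ → ℝ) (c a : ℝ) (S : ENNReal) (x : ℝ) : Prop :=
  S = 0 ∨ ∃ p q, a ≤ p ∧ p < q ∧ q ≤ x ∧ 0 ≤ f q - f p - c ∧ S ≤ ENNReal.ofReal (f q - f p - c)

theorem OneInc.step {f : ℝ → ℝ} {c a d : ℝ}
    (hd : ∀ x y, a ≤ x → x ≤ y → y < d → f x - f y ≤ c) {S : ENNReal} {x y : ℝ}
    (h : OneInc f c a S x) (hax : a ≤ x) (hxy : x < y) (hyd : y ≤ d) :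
    OneInc f c a (S + ENNReal.ofReal (f y - f x - c)) y := by
  rcases le_total (f y - f x - c) 0 with h0 | h0
  · rw [ENNReal.ofReal_of_nonpos h0, add_zero]
    rcases h with h | ⟨p, q, h1, h2, h3, h4, h5⟩
    · exact Or.inl h
    · exact Or.inr ⟨p, q, h1, h2, h3.trans hxy.le, h4, h5⟩
  · right
    rcases h with h | ⟨p, q, h1, h2, h3, h4, h5⟩
    · exact ⟨x, y, hax, hxy, le_rfl, h0, by rw [h, zero_add]⟩
    · have := hd q x (h1.trans h2.le) h3 (hxy.trans_le hyd)
      refine ⟨p, y, h1, (h2.trans_le h3).trans hxy, le_rfl, by linarith, ?_⟩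
      refine (add_le_add h5 le_rfl).trans ?_
      rw [← ENNReal.ofReal_add h4 h0]
      exact ENNReal.ofReal_le_ofReal (by linarith)

theorem OneInc.le {f : ℝ → ℝ} {c a d : ℝ} {S : ENNReal} {x : ℝ}
    (h : OneInc f c a S x) (hx : x ≤ d) :
    S ≤ ⨆ (t : ℝ) (u : ℝ) (_ : a ≤ t) (_ : t < u) (_ : u ≤ d),
          ENNReal.ofReal (f u - f t - c) := by
  rcases h with h | ⟨p, q, h1, h2, h3, h4, h5⟩
  · simp [h]
  · exact h5.trans (le_iSup_of_le p (le_iSup_of_le q (le_iSup_of_le h1 (le_iSup_of_le h2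
      (le_iSup_of_le (h3.trans hx) le_rfl)))))

theorem utvc_split_aux {f : ℝ → ℝ} {c a d s : ℝ} (hda : a ≤ d) (hds : d ≤ s)
    (hd : ∀ x y, a ≤ x → x ≤ y → y < d → f x - f y ≤ c)
    (hd2 : d = s ∨ ∀ ε > 0, ∃ v, a ≤ v ∧ v < d ∧ f d ≤ f v - c + ε) :
    UTVc f c a s =
        (⨆ (t : ℝ) (u : ℝ) (_ : a ≤ t) (_ : t < u) (_ : u ≤ d),
          ENNReal.ofReal (f u - f t - c)) + UTVc f c d s := by
  apply le_antisymm
  · refine iSup_le fun n => iSup_le fun t => iSup_le fun ht => ?_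
    have hts : ∀ j i, i + j = n → t i ≤ s := by
      intro j
      induction j with
      | zero => intro i hi; rw [← hi] at ht; exact ht.2.1
      | succ k ih => intro i hi; exact (ht.2.2 i (by omega)).le.trans (ih (i + 1) (by omega))
    set A := ⨆ (t : ℝ) (u : ℝ) (_ : a ≤ t) (_ : t < u) (_ : u ≤ d),
          ENNReal.ofReal (f u - f t - c) with hA
    have key : ∀ k ≤ n,
        (t k ≤ d → OneInc f c a
          (∑ i ∈ Finset.range k, ENNReal.ofReal (f (t (i + 1)) - f (t i) - c)) (t k)) ∧
        (d ≤ t k → ∑ i ∈ Finset.range k, ENNReal.ofReal (f (t (i + 1)) - f (t i) - c)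
          ≤ A + UTVc f c d (t k)) := by
      intro k
      induction k with
      | zero => intro _; simp [OneInc]
      | succ k ih =>
        intro hk
        obtain ⟨ih1, ih2⟩ := ih (by omega)
        have hlt := ht.2.2 k (by omega)
        have hak := isPart_le ht k (by omega)
        rw [Finset.sum_range_succ]
        have first : t (k + 1) ≤ d → OneInc f c a
            (∑ i ∈ Finset.range k, ENNReal.ofReal (f (t (i + 1)) - f (t i) - c) +
              ENNReal.ofReal (f (t (k + 1)) - f (t k) - c)) (t (k + 1)) := fun h =>
          (ih1 (hlt.le.trans h)).step hd hak hlt h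
        refine ⟨first, fun h => ?_⟩
        rcases le_or_gt d (t k) with h1 | h1
        · refine (add_le_add (ih2 h1) le_rfl).trans ?_
          rw [add_assoc]
          exact add_le_add le_rfl (utvc_snoc h1 hlt)
        · rcases eq_or_lt_of_le h with h2 | h2
          · exact ((first h2.ge).le h2.ge).trans le_self_add
          · have hv : ∀ ε > 0, ∃ v, a ≤ v ∧ v < d ∧ f d ≤ f v - c + ε := by
              rcases hd2 with h3 | h3
              · have := hts (n - (k + 1)) (k + 1) (by omega)
                linarith
              · exact h3
            refine ENNReal.le_of_forall_pos_le_add ?_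
            intro ε hε _
            obtain ⟨v, hv1, hv2, hv3⟩ := hv ε hε
            have e1 : ∑ i ∈ Finset.range k, ENNReal.ofReal (f (t (i + 1)) - f (t i) - c) +
                ENNReal.ofReal (f v - f (t k) - c) ≤ A := by
              rcases le_or_gt v (t k) with h3 | h3
              · have := hd v (t k) hv1 h3 h1
                rw [ENNReal.ofReal_of_nonpos (by linarith), add_zero]
                exact (ih1 h1.le).le h1.le
              · exact ((ih1 h1.le).step hd hak h3 hv2.le).le hv2.le
            have e2 : ENNReal.ofReal (f (t (k + 1)) - f (t k) - c) ≤
                ENNReal.ofReal (f v - f (t k) - c) +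
                  ENNReal.ofReal (f (t (k + 1)) - f d - c) + ε := by
              have : (ε : ENNReal) = ENNReal.ofReal (ε : ℝ) := by simp
              rw [this]
              refine le_trans (ENNReal.ofReal_le_ofReal ?_)
                (ENNReal.ofReal_add_le.trans (add_le_add ENNReal.ofReal_add_le le_rfl))
              linarith
            have e3 : ENNReal.ofReal (f (t (k + 1)) - f d - c) ≤ UTVc f c d (t (k + 1)) :=
              le_trans le_add_self (utvc_snoc (f := f) (c := c) le_rfl h2)
            calc _ ≤ _ := add_le_add le_rfl e2
              _ = (∑ i ∈ Finset.range k, ENNReal.ofReal (f (t (i + 1)) - f (t i) - c) +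
                  ENNReal.ofReal (f v - f (t k) - c)) +
                  ENNReal.ofReal (f (t (k + 1)) - f d - c) + ε := by ring
              _ ≤ _ := add_le_add (add_le_add e1 e3) le_rfl
    rcases le_total (t n) d with h | h
    · exact (((key n le_rfl).1 h).le h).trans le_self_add
    · exact ((key n le_rfl).2 h).trans (add_le_add le_rfl (utvc_mono le_rfl ht.2.1))
  · by_cases htop : UTVc f c d s = ⊤
    · have := utvc_mono (f := f) (c := c) hda (le_refl s)
      rw [htop, top_le_iff] at this
      rw [this]; exact le_top
    · have h0 := utvc_mono (f := f) (c := c) hda (le_refl s)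
      have : (⨆ (t : ℝ) (u : ℝ) (_ : a ≤ t) (_ : t < u) (_ : u ≤ d),
        ENNReal.ofReal (f u - f t - c)) ≤ UTVc f c a s - UTVc f c d s := by
        refine iSup_le fun p => iSup_le fun q => iSup_le fun h1 => iSup_le fun h2 =>
          iSup_le fun h3 => ?_
        refine ENNReal.le_sub_of_add_le_right htop ?_
        exact (add_le_add le_rfl (utvc_mono h3 le_rfl)).trans
          (utvc_cons h1 h2 (h3.trans hds))
      exact (add_le_add this le_rfl).trans (tsub_add_cancel_of_le h0).le

/-- Splitting identity for the upward truncated variation at the first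
downward-crossing time `T_D` (with `T_D ∧ s = s` when no downward crossing occurs). -/
theorem utvc_splitting (a b : ℝ) (hab : a < b) (f : ℝ → ℝ)
    (hf : Cadlag f a b) (c : ℝ) (hc : 0 < c) (s : ℝ) (hs : s ∈ Set.Icc a b) :
    ∀ d : ℝ,
      (d = if h : {r ∈ Set.Icc a b | c ≤ sSup (f '' Set.Icc a r) - f r}.Nonempty
            then min (sInf {r ∈ Set.Icc a b | c ≤ sSup (f '' Set.Icc a r) - f r}) s
            else s) →
      UTVc f c a s =
        (⨆ (t : ℝ) (u : ℝ) (_ : a ≤ t) (_ : t < u) (_ : u ≤ d),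
          ENNReal.ofReal (f u - f t - c)) + UTVc f c d s := by
  intro d hdd
  have hb : ∀ r ≤ b, BddAbove (f '' Set.Icc a r) := fun r hr =>
    hf.bddAbove_image.mono (Set.image_mono (Set.Icc_subset_Icc_right hr))
  set S := {r ∈ Set.Icc a b | c ≤ sSup (f '' Set.Icc a r) - f r} with hS
  have hSbd : BddBelow S := ⟨a, fun r hr => hr.1.1⟩
  have hds : d ≤ s := by
    rw [hdd]; split_ifs
    · exact min_le_right _ _
    · exact le_rfl
  have had : a ≤ d := by
    rw [hdd]; split_ifs with h
    · exact le_min (le_csInf h fun r hr => hr.1.1) hs.1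
    · exact hs.1
  have hlt : ∀ y, y < d → y ∉ S := by
    intro y hy hyS
    have hne : S.Nonempty := ⟨y, hyS⟩
    rw [dif_pos hne] at hdd
    have := csInf_le hSbd hyS
    have := min_le_left (sInf S) s
    linarith
  refine utvc_split_aux had hds ?_ ?_
  · intro x y hx hxy hy
    by_contra hcon
    refine hlt y hy ⟨⟨hx.trans hxy, (hy.le.trans hds).trans hs.2⟩, ?_⟩
    have := le_csSup (hb y ((hy.le.trans hds).trans hs.2)) (Set.mem_image_of_mem f ⟨hx, hxy⟩)
    linarith
  · by_cases hds' : d = s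
    · exact Or.inl hds'
    right
    have hne : S.Nonempty := by
      by_contra h
      rw [dif_neg h] at hdd
      exact hds' hdd
    rw [dif_pos hne] at hdd
    have hdT : d = sInf S := by
      rcases min_choice (sInf S) s with h | h
      · rw [hdd, h]
      · exact absurd (hdd.trans h) hds'
    have hdb : d < b := (lt_of_le_of_ne hds hds').trans_le hs.2
    have hdS : d ∈ S := by
      by_contra hcon
      have hlt2 : sSup (f '' Set.Icc a d) - f d < c := by
        by_contra h
        exact hcon ⟨⟨had, hdb.le⟩, not_lt.mp h⟩
      set ε := (c - (sSup (f '' Set.Icc a d) - f d)) / 3 with hε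
      have hεp : 0 < ε := by rw [hε]; linarith
      have hev := (hf.1 d ⟨had, hdb⟩).eventually (Metric.ball_mem_nhds (f d) hεp)
      rw [eventually_nhdsWithin_iff, Metric.eventually_nhds_iff] at hev
      obtain ⟨δ, hδ, hev⟩ := hev
      have near : ∀ y, d ≤ y → y < d + δ → |f y - f d| < ε := by
        intro y h1 h2
        rcases eq_or_lt_of_le h1 with h | h
        · rw [← h]; simpa using hεp
        · have := hev (y := y) (by rw [Real.dist_eq, abs_lt]; constructor <;> linarith) h
          simpa [Real.dist_eq] using this
      obtain ⟨r, hr, hrd⟩ := exists_lt_of_csInf_lt hne (show sInf S < d + δ by linarith)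
      have hdr : d ≤ r := by rw [hdT]; exact csInf_le hSbd hr
      have hfd := le_csSup (hb d hdb.le) (Set.mem_image_of_mem f (Set.right_mem_Icc.mpr had))
      have hM : sSup (f '' Set.Icc a r) ≤ sSup (f '' Set.Icc a d) + ε := by
        refine csSup_le ⟨f a, a, ⟨le_rfl, had.trans hdr⟩, rfl⟩ ?_
        rintro _ ⟨y, hy, rfl⟩
        rcases le_total y d with h | h
        · have := le_csSup (hb d hdb.le) (Set.mem_image_of_mem f ⟨hy.1, h⟩)
          linarith
        · have := abs_lt.mp (near y h (hy.2.trans_lt hrd))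
          linarith
      have h1 := abs_lt.mp (near r hdr hrd)
      have h2 := hr.2
      linarith
    intro ε hε
    have hm : 0 < min ε c := lt_min hε hc
    obtain ⟨_, ⟨v, hv, rfl⟩, hvl⟩ := exists_lt_of_lt_csSup
      (⟨f a, a, ⟨le_rfl, had⟩, rfl⟩ : (f '' Set.Icc a d).Nonempty)
      (show sSup (f '' Set.Icc a d) - min ε c < _ by linarith)
    have h2 := hdS.2
    have h3 := min_le_left ε c
    have h4 := min_le_right ε c
    refine ⟨v, hv.1, lt_of_le_of_ne hv.2 ?_, by linarith⟩
    rintro rfl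
    linarith
end
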